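/- Let $k$ be an algebraically closed field of characteristic $2$, let $d \ge 1$, and let $B = k[[x_0,\dots,x_d]]$ be the formal power series ring with maximal ideal $\mathfrak m_B = (x_0,\dots,x_d)$. Let $J \subseteq B$ be the ideal generated by $x_2,\dots,x_d$ (so $J = 0$ if $d = 1$). Let $Q$ be a homogeneous polynomial of degree $2$ over $k$ in the variables $x_2,\dots,x_d$, that is, a $k$-linear combination of the monomials $x_ix_j$ with $2 \le i \le j \le d$, and let $G \in \mathfrak m_B^3$. 1. If $F = x_0x_1 + Q + G$, then there exist units $a_0, b_1$ of $B$, elements $a_1, b_0 \in \mathfrak m_B$, elements $a_2, b_2 \in J$, and $G_1 \in J^3$ such that $$F = (a_0x_0 + a_1x_1 + a_2)(b_0x_0 + b_1x_1 + b_2) + Q + G_1.$$ 2. If $F = x_0^2 + x_0x_1 + x_1^2 + Q + G$ (which is the form that $x_0x_1 + Q + G'$, with $G' \in \mathfrak m_B^3$, takes after a suitable invertible $k$-linear change of the variables $x_0, x_1$), then there exist units $a_0, a_1, b_0, b_1$ of $B$, elements $a_2, b_2 \in J$, and $G_1 \in J^3$ such that $$F = (a_0x_0 + a_1x_1 + a_2)(b_0x_0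 + b_1x_1 + b_2) + Q + G_1.$$ -/

import Mathlib

open MvPowerSeries

namespace CompletingSquares

/-- The maximal ideal `𝔪_B = (x_0,…,x_d)` of `B = k[[x_0,…,x_d]]`. -/
noncomputable def maxIdeal (k : Type*) [Field k] (d : ℕ) : Ideal (MvPowerSeries (Fin (d + 1)) k) :=
  Ideal.span (Set.range (X : Fin (d + 1) → MvPowerSeries (Fin (d + 1)) k))

/-- The ideal `J = (x_2,…,x_d)` of `B = k[[x_0,…,x_d]]` (it is zero if `d = 1`). -/
noncomputable def idealJ (k : Type*) [Field k] (d : ℕ) : Ideal (MvPowerSeries (Fin (d + 1)) k) :=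
  Ideal.span {f | ∃ i : Fin (d + 1), 2 ≤ (i : ℕ) ∧ f = X i}

/-- The quadratic forms over `k` in `x_2,…,x_d`: the `k`-linear combinations in `B` of the
monomials `x_i x_j` with `i, j ≥ 2`. -/
noncomputable def quadraticForms (k : Type*) [Field k] (d : ℕ) :
    Submodule k (MvPowerSeries (Fin (d + 1)) k) :=
  Submodule.span k {f | ∃ i j : Fin (d + 1), 2 ≤ (i : ℕ) ∧ 2 ≤ (j : ℕ) ∧ f = X i * X j}

end CompletingSquares

/-!
The argument takes place in a ring `B` that is complete for an ideal `I = (L, M) + J` with `J`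
finitely generated. Since `I³ = (L, M) I² + J³`, the linear map `(u, v, c) ↦ u M + L v + c` sends
`I² × I² × J³` onto `I³`. Adding the quadratic term `u v` perturbs it by something contracting for
the `I`-adic filtration, so successive approximation still solves
`(L + u) (M + v) + c = L M + G` for every `G ∈ I³`. Splitting `u, v ∈ I² = I (x₀, x₁) + I J` then
yields the coefficients. The form `x₀² + x₀ x₁ + x₁²` is the product of `x₀ - ω x₁` and
`x₀ - ω² x₁`, where `ω² + ω + 1 = 0`; these span `(x₀, x₁)` because `(ω - ω²)² = -3` is a unit.
-/

namespace CompletingSquares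

section Adic

variable {R : Type*} [CommRing R] {I : Ideal R}
  {N P : Type*} [AddCommGroup N] [Module R N] [AddCommGroup P] [Module R P]

open AdicCompletion TensorProduct in
theorem isPrecomplete_of_finite (I : Ideal R) [IsPrecomplete I R] (N : Type*) [AddCommGroup N]
    [Module R N] [Module.Finite R N] : IsPrecomplete I N := by
  refine of_surjective_iff.mp fun y => ?_
  obtain ⟨t, rfl⟩ := ofTensorProduct_surjective_of_finite I N y
  induction t with
  | zero => exact ⟨0, by simp⟩
  | tmul r x =>
    obtain ⟨s, rfl⟩ := of_surjective I R r
    exact ⟨s • x, by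
      rw [map_smul, ofTensorProduct_tmul, ← algebraMap_smul (AdicCompletion I R)]; rfl⟩
  | add t₁ t₂ h₁ h₂ =>
    obtain ⟨x₁, h₁⟩ := h₁
    obtain ⟨x₂, h₂⟩ := h₂
    exact ⟨x₁ + x₂, by rw [map_add, map_add, h₁, h₂]⟩

theorem apply_mem_smul_range (f : N →ₗ[R] P) {x : N} (hx : x ∈ I • (⊤ : Submodule R N)) :
    f x ∈ I • LinearMap.range f := by
  rw [LinearMap.range_eq_map, ← Submodule.map_smul'']
  exact Submodule.mem_map_of_mem hx

theorem exists_forall_exists_sub_mem_pow_smul_top [IsPrecomplete I N] {p : ℕ → N → Prop}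
    {x₀ : N} (hx₀ : p 0 x₀)
    (hstep : ∀ n x, p n x → ∃ y, p (n + 1) y ∧ x - y ∈ (I ^ n • ⊤ : Submodule R N)) :
    ∃ x, ∀ n, ∃ y, p n y ∧ x - y ∈ (I ^ n • ⊤ : Submodule R N) := by
  choose! next hnext hsub using hstep
  let seq : ℕ → N := fun n => n.rec x₀ next
  have hseq : ∀ n, p n (seq n) := fun n => by
    induction n with
    | zero => exact hx₀
    | succ n ih => exact hnext n _ ih
  have hcauchy : AdicCompletion.IsAdicCauchy I N seq :=
    (AdicCompletion.isAdicCauchy_iff I N seq).2 fun n => SModEq.sub_mem.2 (hsub n _ (hseq n))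
  obtain ⟨x, hx⟩ := IsPrecomplete.prec ‹_› hcauchy
  exact ⟨x, fun n => ⟨seq n, hseq n, SModEq.sub_mem.1 (hx n).symm⟩⟩

theorem exists_add_eq_of_contracting [IsPrecomplete I N] [IsHausdorff I P]
    (ℓ : N →ₗ[R] P) (q : N → P)
    (hq : ∀ n x y, x - y ∈ (I ^ n • ⊤ : Submodule R N) →
      q x - q y ∈ I ^ (n + 1) • LinearMap.range ℓ)
    {g : P} (hg : g - q 0 ∈ LinearMap.range ℓ) :
    ∃ x, ℓ x + q x = g := by
  have exists_correction (n : ℕ) (x : N) (hx : g - (ℓ x + q x) ∈ I ^ n • LinearMap.range ℓ) :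
      ∃ y, g - (ℓ y + q y) ∈ I ^ (n + 1) • LinearMap.range ℓ ∧
        x - y ∈ (I ^ n • ⊤ : Submodule R N) := by
    rw [LinearMap.range_eq_map, ← Submodule.map_smul''] at hx
    obtain ⟨δ, hδ, hℓδ⟩ := hx
    have hsub : x - (x + δ) ∈ (I ^ n • ⊤ : Submodule R N) := by simpa using hδ
    refine ⟨x + δ, ?_, hsub⟩
    convert hq n x (x + δ) hsub using 1
    rw [map_add, hℓδ]
    abel
  obtain ⟨x, hx⟩ := exists_forall_exists_sub_mem_pow_smul_top (x₀ := (0 : N))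
    (by simpa using hg) exists_correction
  refine ⟨x, (IsHausdorff.eq_iff_smodEq (I := I)).2 fun n => SModEq.sub_mem.2 ?_⟩
  obtain ⟨y, hy, hxy⟩ := hx n
  have hℓ : ℓ (x - y) ∈ I ^ n • LinearMap.range ℓ := apply_mem_smul_range ℓ hxy
  have hqn : q x - q y ∈ I ^ n • LinearMap.range ℓ :=
    Submodule.smul_mono_left (Ideal.pow_le_pow_right n.le_succ) (hq n x y hxy)
  have hsum := sub_mem (add_mem hℓ hqn) hy
  rw [map_sub, show ℓ x - ℓ y + (q x - q y) - (g - (ℓ y + q y)) = ℓ x + q x - g by abel] at hsum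
  exact Submodule.smul_mono le_rfl le_top hsum

theorem isUnit_add_of_mem [IsAdicComplete I R] {a p : R} (ha : IsUnit a) (hp : p ∈ I) :
    IsUnit (a + p) := by
  have hunit := Ideal.mem_jacobson_bot.1 (IsAdicComplete.le_jacobson_bot I hp) ↑ha.unit⁻¹
  convert ha.mul hunit using 1
  linear_combination -p * ha.mul_val_inv

end Adic

section Factorization

variable {B : Type*} [CommRing B] {I J : Ideal B}

theorem sup_pow_succ_le (K J : Ideal B) (n : ℕ) :
    (K ⊔ J) ^ (n + 1) ≤ K * (K ⊔ J) ^ n ⊔ J ^ (n + 1) := by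
  induction n with
  | zero => simp
  | succ n ih =>
    calc (K ⊔ J) ^ (n + 2) = K * (K ⊔ J) ^ (n + 1) ⊔ J * (K ⊔ J) ^ (n + 1) := by
          rw [pow_succ', Ideal.sup_mul]
      _ ≤ K * (K ⊔ J) ^ (n + 1) ⊔ J * (K * (K ⊔ J) ^ n ⊔ J ^ (n + 1)) := by gcongr
      _ = K * (K ⊔ J) ^ (n + 1) ⊔ (K * (J * (K ⊔ J) ^ n) ⊔ J ^ (n + 2)) := by
          rw [Ideal.mul_sup, mul_left_comm, ← pow_succ']
      _ ≤ K * (K ⊔ J) ^ (n + 1) ⊔ J ^ (n + 2) := by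
          rw [← sup_assoc, pow_succ' (K ⊔ J) n]
          gcongr
          refine sup_le le_rfl ?_
          gcongr
          exact le_sup_right

/-- The linear part `(u, v, c) ↦ u M + L v + c` of the map
`(u, v, c) ↦ (L + u) (M + v) + c - L M` on `I² × I² × J³`, whose variables are the
corrections to `L`, to `M` and to the remainder in the factorization of `L M + G`. -/
def linearPart (I J : Ideal B) (L M : B) :
    (I ^ 2 : Ideal B) × (I ^ 2 : Ideal B) × (J ^ 3 : Ideal B) →ₗ[B] B :=
  (M • (I ^ 2).subtype).coprod ((L • (I ^ 2).subtype).coprod (J ^ 3).subtype)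

theorem linearPart_apply (L M : B)
    (x : (I ^ 2 : Ideal B) × (I ^ 2 : Ideal B) × (J ^ 3 : Ideal B)) :
    linearPart I J L M x = M * x.1 + (L * x.2.1 + x.2.2) := by
  simp [linearPart]

theorem pow_three_le_range_linearPart {L M : B} (hI : Ideal.span {L, M} ⊔ J = I) :
    I ^ 3 ≤ LinearMap.range (linearPart I J L M) := by
  intro g hg
  have hg' := sup_pow_succ_le (Ideal.span {L, M}) J 2 (hI.symm ▸ hg)
  rw [hI] at hg'
  simp only [Ideal.span_insert, Ideal.sup_mul, Submodule.mem_sup,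
    Ideal.mem_span_singleton_mul] at hg'
  obtain ⟨_, ⟨_, ⟨v, hv, rfl⟩, _, ⟨u, hu, rfl⟩, rfl⟩, c, hc, rfl⟩ := hg'
  exact ⟨(⟨u, hu⟩, ⟨v, hv⟩, ⟨c, hc⟩), by rw [linearPart_apply]; ring⟩

theorem mul_sub_mul_mem_mul {P : Type*} [AddCommGroup P] [Module B P] {A K : Ideal B}
    {x y : K × K × P} (hxy : x - y ∈ A • (⊤ : Submodule B (K × K × P))) :
    (x.1 * x.2.1 - y.1 * y.2.1 : B) ∈ A * K ^ 2 := by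
  have coord_mem (f : K × K × P →ₗ[B] K) : (f x - f y : B) ∈ A * K := by
    have hf := apply_mem_smul_range (K.subtype ∘ₗ f) hxy
    rw [map_sub] at hf
    exact Submodule.smul_mono le_rfl
      ((LinearMap.range_comp_le_range _ _).trans K.range_subtype.le) hf
  have h₁ := coord_mem (LinearMap.fst B K (K × P))
  have h₂ := coord_mem (LinearMap.fst B K P ∘ₗ LinearMap.snd B K (K × P))
  have hsum := add_mem (Ideal.mul_mem_mul h₁ x.2.1.2) (Ideal.mul_mem_mul h₂ y.1.2)
  rw [mul_assoc, ← sq] at hsum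
  convert hsum using 1
  simp only [LinearMap.fst_apply, LinearMap.snd_apply, LinearMap.comp_apply]
  ring

theorem exists_mul_add_eq_add_mul_add [IsAdicComplete I B] {L M G : B} (hJ : J.FG)
    (hI : Ideal.span {L, M} ⊔ J = I) (hG : G ∈ I ^ 3) :
    ∃ u ∈ I ^ 2, ∃ v ∈ I ^ 2, ∃ G₁ ∈ J ^ 3, L * M + G = (L + u) * (M + v) + G₁ := by
  have hIfg : I.FG := hI ▸ (Submodule.fg_span (Set.toFinite {L, M})).sup hJ
  have : Module.Finite B (I ^ 2 : Ideal B) := .of_fg hIfg.pow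
  have : Module.Finite B (J ^ 3 : Ideal B) := .of_fg hJ.pow
  have := isPrecomplete_of_finite I
    ((I ^ 2 : Ideal B) × (I ^ 2 : Ideal B) × (J ^ 3 : Ideal B))
  have hrange := pow_three_le_range_linearPart hI
  obtain ⟨⟨u, v, c⟩, h⟩ : ∃ x, linearPart I J L M x + x.1 * x.2.1 = G := by
    refine exists_add_eq_of_contracting (I := I) _ (fun x => (x.1 * x.2.1 : B))
      (fun n x y hxy => ?_) (hrange (by simpa using hG))
    have hmem := mul_sub_mul_mem_mul hxy
    rw [← pow_mul, ← pow_add, show n + 2 * 2 = (n + 1) + 3 by ring, pow_add] at hmem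
    exact Submodule.smul_mono le_rfl hrange hmem
  refine ⟨u, u.2, v, v.2, c, c.2, ?_⟩
  rw [linearPart_apply] at h
  linear_combination -h

theorem exists_eq_mul_add_mul_add_of_mem_sq {x₀ x₁ f : B} (hI : Ideal.span {x₀, x₁} ⊔ J = I)
    (hf : f ∈ I ^ 2) : ∃ p ∈ I, ∃ q ∈ I, ∃ r ∈ J, f = p * x₀ + q * x₁ + r := by
  have hf' : f ∈ I * (Ideal.span {x₀, x₁} ⊔ J) := by rwa [hI, ← sq]
  simp only [Ideal.span_insert, Ideal.mul_sup, Submodule.mem_sup,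
    Ideal.mem_mul_span_singleton] at hf'
  obtain ⟨_, ⟨_, ⟨p, hp, rfl⟩, _, ⟨q, hq, rfl⟩, rfl⟩, r, hr, rfl⟩ := hf'
  exact ⟨p, hp, q, hq, r, Ideal.mul_le_right hr, rfl⟩

theorem span_pair_eq_of_isUnit_det {a b c e x₀ x₁ : B} (hdet : IsUnit (a * e - b * c)) :
    Ideal.span {a * x₀ + b * x₁, c * x₀ + e * x₁} = Ideal.span {x₀, x₁} := by
  obtain ⟨t, ht⟩ := hdet.exists_left_inv
  apply le_antisymm <;> rw [Ideal.span_le, Set.pair_subset_iff] <;>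
    simp only [SetLike.mem_coe, Ideal.mem_span_pair]
  · exact ⟨⟨a, b, rfl⟩, ⟨c, e, rfl⟩⟩
  · refine ⟨⟨t * e, -(t * b), ?_⟩, ⟨-(t * c), t * a, ?_⟩⟩
    · linear_combination x₀ * ht
    · linear_combination x₁ * ht

theorem exists_mul_add_eq_of_isUnit_det [IsAdicComplete I B] {x₀ x₁ a b c e G : B} (hJ : J.FG)
    (hI : Ideal.span {x₀, x₁} ⊔ J = I) (hdet : IsUnit (a * e - b * c)) (hG : G ∈ I ^ 3) :
    ∃ p ∈ I, ∃ q ∈ I, ∃ p' ∈ I, ∃ q' ∈ I, ∃ r ∈ J, ∃ r' ∈ J, ∃ G₁ ∈ J ^ 3,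
      (a * x₀ + b * x₁) * (c * x₀ + e * x₁) + G =
        ((a + p) * x₀ + (b + q) * x₁ + r) * ((c + p') * x₀ + (e + q') * x₁ + r') + G₁ := by
  obtain ⟨u, hu, v, hv, G₁, hG₁, h⟩ := exists_mul_add_eq_add_mul_add hJ
    ((span_pair_eq_of_isUnit_det hdet).symm ▸ hI) hG
  obtain ⟨p, hp, q, hq, r, hr, rfl⟩ := exists_eq_mul_add_mul_add_of_mem_sq hI hu
  obtain ⟨p', hp', q', hq', r', hr', rfl⟩ := exists_eq_mul_add_mul_add_of_mem_sq hI hv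
  exact ⟨p, hp, q, hq, p', hp', q', hq', r, hr, r', hr', G₁, hG₁, by linear_combination h⟩

end Factorization

section PowerSeries

variable (k : Type*) [Field k]

theorem exists_sq_add_self_add_one_eq_zero [IsAlgClosed k] : ∃ ω : k, ω ^ 2 + ω + 1 = 0 := by
  obtain ⟨ω, hω⟩ := IsAlgClosed.exists_root (Polynomial.cyclotomic 3 k)
    (Polynomial.degree_cyclotomic_pos 3 k (by norm_num)).ne'
  exact ⟨ω, by simpa [Polynomial.cyclotomic_three] using hω⟩

instance isAdicComplete_maxIdeal (d : ℕ) :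
    IsAdicComplete (maxIdeal k d) (MvPowerSeries (Fin (d + 1)) k) :=
  inferInstanceAs (IsAdicComplete (Ideal.span (Set.range X)) _)

theorem idealJ_fg (d : ℕ) : (idealJ k d).FG := by
  refine Submodule.fg_span ((Set.finite_range (X : Fin (d + 1) → _)).subset ?_)
  rintro _ ⟨i, -, rfl⟩
  exact ⟨i, rfl⟩

theorem span_X_pair_sup_idealJ {d : ℕ} (hd : 1 ≤ d) :
    Ideal.span {X ⟨0, Nat.succ_pos d⟩, X ⟨1, Nat.lt_succ_of_le hd⟩} ⊔ idealJ k d =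
      maxIdeal k d := by
  rw [idealJ, maxIdeal, ← Ideal.span_union]
  congr 1
  ext f
  constructor
  · rintro ((rfl | rfl) | ⟨i, -, rfl⟩) <;> exact Set.mem_range_self _
  · rintro ⟨i, rfl⟩
    obtain hi | hi | hi : (i : ℕ) = 0 ∨ (i : ℕ) = 1 ∨ 2 ≤ (i : ℕ) := by omega
    · exact .inl (.inl (congrArg X (Fin.ext hi)))
    · exact .inl (.inr (congrArg X (Fin.ext hi)))
    · exact .inr ⟨i, hi, rfl⟩

end PowerSeries

end CompletingSquares

open CompletingSquares in
theorem completing_squares_char_two_general {B : Type*} [CommRing B] {I J : Ideal B}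
    [IsAdicComplete I B] {x₀ x₁ ω G : B} (hJ : J.FG)
    (hI : Ideal.span {x₀, x₁} ⊔ J = I) (Q : B) (hG : G ∈ I ^ 3)
    (hω : ω ^ 2 + ω + 1 = 0) (h3 : IsUnit (3 : B)) :
    (∃ a₀ a₁ a₂ b₀ b₁ b₂ G₁ : B,
      IsUnit a₀ ∧ IsUnit b₁ ∧ a₁ ∈ I ∧ b₀ ∈ I ∧ a₂ ∈ J ∧ b₂ ∈ J ∧ G₁ ∈ J ^ 3 ∧
      x₀ * x₁ + Q + G =
        (a₀ * x₀ + a₁ * x₁ + a₂) * (b₀ * x₀ + b₁ * x₁ + b₂) + Q + G₁) ∧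
    (∃ a₀ a₁ a₂ b₀ b₁ b₂ G₁ : B,
      IsUnit a₀ ∧ IsUnit a₁ ∧ IsUnit b₀ ∧ IsUnit b₁ ∧ a₂ ∈ J ∧ b₂ ∈ J ∧ G₁ ∈ J ^ 3 ∧
      (x₀ ^ 2 + x₀ * x₁ + x₁ ^ 2) + Q + G =
        (a₀ * x₀ + a₁ * x₁ + a₂) * (b₀ * x₀ + b₁ * x₁ + b₂) + Q + G₁) := by
  constructor
  · obtain ⟨p, hp, q, hq, p', hp', q', hq', r, hr, r', hr', G₁, hG₁, h⟩ :=
      exists_mul_add_eq_of_isUnit_det (a := 1) (b := 0) (c := 0) (e := 1) hJ hI (by simp) hG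
    exact ⟨1 + p, q, r, p', 1 + q', r', G₁, isUnit_add_of_mem isUnit_one hp,
      isUnit_add_of_mem isUnit_one hq', hq, hp', hr, hr', hG₁, by linear_combination h⟩
  · have hω_unit : IsUnit ω := .of_mul_eq_one (-(ω + 1)) (by linear_combination -hω)
    have hdet : IsUnit (1 * -ω ^ 2 - -ω * 1) := by
      refine isUnit_of_mul_isUnit_left (y := 1 * -ω ^ 2 - -ω * 1) ?_
      convert h3.neg using 1
      linear_combination (ω ^ 2 - 3 * ω + 3) * hω
    obtain ⟨p, hp, q, hq, p', hp', q', hq', r, hr, r', hr', G₁, hG₁, h⟩ :=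
      exists_mul_add_eq_of_isUnit_det hJ hI hdet hG
    exact ⟨1 + p, -ω + q, r, 1 + p', -ω ^ 2 + q', r', G₁, isUnit_add_of_mem isUnit_one hp,
      isUnit_add_of_mem hω_unit.neg hq, isUnit_add_of_mem isUnit_one hp',
      isUnit_add_of_mem (hω_unit.pow 2).neg hq', hr, hr', hG₁, by
        linear_combination h + (x₀ * x₁ + (1 - ω) * x₁ ^ 2) * hω⟩

open CompletingSquares in
/-- Completing squares in characteristic 2. Let `Q` be a quadratic form in `x_2,…,x_d` and
`G ∈ 𝔪_B³`.
First part: `x_0x_1 + Q + G = (a_0x_0 + a_1x_1 + a_2)(b_0x_0 + b_1x_1 + b_2) + Q + G_1` with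
`a_0, b_1` units, `a_1, b_0 ∈ 𝔪_B`, `a_2, b_2 ∈ J` and `G_1 ∈ J³`.
Second part: if `x_0x_1` is replaced by the linearly equivalent form `x_0² + x_0x_1 + x_1²`,
there is such an expression in which `a_0, a_1, b_0, b_1` are all units. -/
theorem completing_squares_char_two (k : Type*) [Field k] [IsAlgClosed k] [CharP k 2]
    (d : ℕ) (hd : 1 ≤ d) (x₀ x₁ Q G : MvPowerSeries (Fin (d + 1)) k)
    (hx₀ : x₀ = X (⟨0, Nat.succ_pos d⟩ : Fin (d + 1)))
    (hx₁ : x₁ = X (⟨1, Nat.lt_succ_of_le hd⟩ : Fin (d + 1)))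
    (hQ : Q ∈ CompletingSquares.quadraticForms k d)
    (hG : G ∈ CompletingSquares.maxIdeal k d ^ 3) :
    (∃ a₀ a₁ a₂ b₀ b₁ b₂ G₁ : MvPowerSeries (Fin (d + 1)) k,
      IsUnit a₀ ∧ IsUnit b₁ ∧
      a₁ ∈ CompletingSquares.maxIdeal k d ∧ b₀ ∈ CompletingSquares.maxIdeal k d ∧
      a₂ ∈ CompletingSquares.idealJ k d ∧ b₂ ∈ CompletingSquares.idealJ k d ∧
      G₁ ∈ CompletingSquares.idealJ k d ^ 3 ∧
      x₀ * x₁ + Q + G =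
        (a₀ * x₀ + a₁ * x₁ + a₂) * (b₀ * x₀ + b₁ * x₁ + b₂) + Q + G₁) ∧
    (∃ a₀ a₁ a₂ b₀ b₁ b₂ G₁ : MvPowerSeries (Fin (d + 1)) k,
      IsUnit a₀ ∧ IsUnit a₁ ∧ IsUnit b₀ ∧ IsUnit b₁ ∧
      a₂ ∈ CompletingSquares.idealJ k d ∧ b₂ ∈ CompletingSquares.idealJ k d ∧
      G₁ ∈ CompletingSquares.idealJ k d ^ 3 ∧
      (x₀ ^ 2 + x₀ * x₁ + x₁ ^ 2) + Q + G =
        (a₀ * x₀ + a₁ * x₁ + a₂) * (b₀ * x₀ + b₁ * x₁ + b₂) + Q + G₁) := by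
  subst hx₀ hx₁
  obtain ⟨ω, hω⟩ := exists_sq_add_self_add_one_eq_zero k
  have three_eq_one : (3 : k) = 1 := by linear_combination CharTwo.two_eq_zero (R := k)
  refine completing_squares_char_two_general (ω := C ω) (idealJ_fg k d)
    (span_X_pair_sup_idealJ k hd) Q hG ?_ ?_
  · simpa using congrArg (C (σ := Fin (d + 1))) hω
  · simp [← map_ofNat (C (σ := Fin (d + 1)) (R := k)) 3, three_eq_one]
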